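/- Let γ : ℝ → ℝ² be a smooth regular plane curve parametrised by arc length with curvature κ, and let S ∈ ℝ satisfy −κ''(s) = 2S ⟨γ'(s), γ(s)⟩ for all s. Suppose that for all sequences (p_i) with p_i → −∞ and (q_i) with q_i → +∞, one has (κ(q_i)κ'(q_i) − 2S⟨ν(q_i), γ(q_i)⟩) − (κ(p_i)κ'(p_i) − 2S⟨ν(p_i), γ(p_i)⟩) → 0 as i → ∞. Then κ' ≡ 0, i.e. κ is constant; if moreover γ is not periodic (there is no P > 0 with γ(s+P) = γ(s) for all s), then γ is a straight line: γ(s) = γ(0) + s γ'(0). -/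

import Mathlib

/-!
With unit tangent `T = γ'`, the Frenet equations `T' = κ ν`, `ν' = -κ T` show that along a rotator
`κ κ' - 2 S ⟨ν, γ⟩` is a primitive of `κ' ^ 2`. It is therefore monotone, and the decay condition
forces it to be constant, so `κ' = 0`. If the constant `κ` is nonzero, `ν` rotates about the origin
with constant speed while the centre `γ + κ⁻¹ ν` is fixed, so `γ` is periodic; otherwise `T` is
constant and `γ` is a line.
-/

open Real MeasureTheory Filter

/-- Euclidean inner product on `ℝ × ℝ`. -/
def innerP (a b : ℝ × ℝ) : ℝ := a.1 * b.1 + a.2 * b.2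

/-- Unit normal `ν = (y', -x')` of a plane curve parametrised by arc length. -/
noncomputable def nuA (γ : ℝ → ℝ × ℝ) (s : ℝ) : ℝ × ℝ :=
  ((deriv γ s).2, -(deriv γ s).1)

/-- Curvature `κ = ⟨γ'', ν⟩` of a plane curve parametrised by arc length. -/
noncomputable def curvA (γ : ℝ → ℝ × ℝ) (s : ℝ) : ℝ :=
  innerP (deriv (deriv γ) s) (nuA γ s)

section Calculus

theorem eq_of_monotone_of_tendsto_sub {α β ι : Type*} [Preorder α] [AddCommGroup β]
    [PartialOrder β] [IsOrderedAddMonoid β] [TopologicalSpace β] [ClosedIciTopology β]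
    {F : α → β} (hF : Monotone F) {l : Filter ι} [l.NeBot] {p q : ι → α}
    (hp : Tendsto p l atBot) (hq : Tendsto q l atTop)
    (hlim : Tendsto (fun i => F (q i) - F (p i)) l (nhds 0)) (a b : α) : F a = F b := by
  have increment_nonpos (a b : α) : F b - F a ≤ 0 := by
    refine ge_of_tendsto hlim ?_
    filter_upwards [hp.eventually_le_atBot a, hq.eventually_ge_atTop b] with i hpa hbq
    exact sub_le_sub (hF hbq) (hF hpa)
  exact le_antisymm (sub_nonpos.mp (increment_nonpos b a)) (sub_nonpos.mp (increment_nonpos a b))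

theorem eq_zero_of_hasDerivAt_sq_of_tendsto_sub {ι : Type*} {F g : ℝ → ℝ}
    (hF : ∀ s, HasDerivAt F (g s ^ 2) s) {l : Filter ι} [l.NeBot] {p q : ι → ℝ}
    (hp : Tendsto p l atBot) (hq : Tendsto q l atTop)
    (hlim : Tendsto (fun i => F (q i) - F (p i)) l (nhds 0)) (s : ℝ) : g s = 0 := by
  have hmono : Monotone F := monotone_of_hasDerivAt_nonneg hF fun s => sq_nonneg (g s)
  have hconst : F = fun _ => F 0 :=
    funext fun t => eq_of_monotone_of_tendsto_sub hmono hp hq hlim t 0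
  have hsq : g s ^ 2 = 0 := (hF s).unique (hconst ▸ hasDerivAt_const s (F 0))
  exact pow_eq_zero_iff two_ne_zero |>.mp hsq

theorem hasDerivAt_fst {𝕜 E F : Type*} [NontriviallyNormedField 𝕜] [NormedAddCommGroup E]
    [NormedSpace 𝕜 E] [NormedAddCommGroup F] [NormedSpace 𝕜 F] {f : 𝕜 → E × F} {f' : E × F}
    {s : 𝕜} (hf : HasDerivAt f f' s) : HasDerivAt (fun t => (f t).1) f'.1 s :=
  (hasFDerivAt_fst (p := f s)).comp_hasDerivAt s hf

theorem hasDerivAt_snd {𝕜 E F : Type*} [NontriviallyNormedField 𝕜] [NormedAddCommGroup E]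
    [NormedSpace 𝕜 E] [NormedAddCommGroup F] [NormedSpace 𝕜 F] {f : 𝕜 → E × F} {f' : E × F}
    {s : 𝕜} (hf : HasDerivAt f f' s) : HasDerivAt (fun t => (f t).2) f'.2 s :=
  (hasFDerivAt_snd (p := f s)).comp_hasDerivAt s hf

theorem hasDerivAt_innerP {f g : ℝ → ℝ × ℝ} {f' g' : ℝ × ℝ} {s : ℝ} (hf : HasDerivAt f f' s)
    (hg : HasDerivAt g g' s) :
    HasDerivAt (fun t => innerP (f t) (g t)) (innerP f' (g s) + innerP (f s) g') s := by
  refine (((hasDerivAt_fst hf).mul (hasDerivAt_fst hg)).add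
    ((hasDerivAt_snd hf).mul (hasDerivAt_snd hg))).congr_deriv ?_
  simp only [innerP]
  ring

variable {E : Type*} [NormedAddCommGroup E] [NormedSpace ℝ E]

theorem eq_of_hasDerivAt_zero {f : ℝ → E} (hf : ∀ s, HasDerivAt f 0 s) (s t : ℝ) : f s = f t :=
  is_const_of_deriv_eq_zero (fun u => (hf u).differentiableAt) (fun u => (hf u).deriv) s t

theorem eq_add_smul_of_hasDerivAt_const {f : ℝ → E} {v : E} (hf : ∀ s, HasDerivAt f v s)
    (s : ℝ) : f s = f 0 + s • v := by
  have hdiff (t : ℝ) : HasDerivAt (fun u => f u - u • v) 0 t :=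
    ((hf t).sub ((hasDerivAt_id t).smul_const v)).congr_deriv (by rw [one_smul, sub_self])
  have h : f s - s • v = f 0 - (0 : ℝ) • v := eq_of_hasDerivAt_zero hdiff s 0
  rw [zero_smul, sub_zero] at h
  exact sub_eq_iff_eq_add.mp h

theorem eq_cos_smul_sub_sin_smul_of_hasDerivAt {a b : ℝ → E} {k : ℝ}
    (ha : ∀ s, HasDerivAt a (-k • b s) s) (hb : ∀ s, HasDerivAt b (k • a s) s) (s : ℝ) :
    a s = cos (k * s) • a 0 - sin (k * s) • b 0 := by
  have hcos (t : ℝ) : HasDerivAt (fun u => cos (k * u)) (-sin (k * t) * k) t := by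
    simpa only [mul_one, id] using ((hasDerivAt_id t).const_mul k).cos
  have hsin (t : ℝ) : HasDerivAt (fun u => sin (k * u)) (cos (k * t) * k) t := by
    simpa only [mul_one, id] using ((hasDerivAt_id t).const_mul k).sin
  -- Rotating `(a, b)` back by the angle `k s` gives constants.
  have hA : cos (k * s) • a s + sin (k * s) • b s = a 0 := by
    simpa using eq_of_hasDerivAt_zero (fun t => (((hcos t).smul (ha t)).add
      ((hsin t).smul (hb t))).congr_deriv (by module)) s 0
  have hB : cos (k * s) • b s - sin (k * s) • a s = b 0 := by
    simpa using eq_of_hasDerivAt_zero (fun t => (((hcos t).smul (hb t)).sub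
      ((hsin t).smul (ha t))).congr_deriv (by module)) s 0
  calc a s = (cos (k * s) ^ 2 + sin (k * s) ^ 2) • a s := by rw [cos_sq_add_sin_sq, one_smul]
    _ = cos (k * s) • (cos (k * s) • a s + sin (k * s) • b s)
        - sin (k * s) • (cos (k * s) • b s - sin (k * s) • a s) := by module
    _ = cos (k * s) • a 0 - sin (k * s) • b 0 := by rw [hA, hB]

theorem periodic_of_hasDerivAt_rotation {a b : ℝ → E} {k : ℝ}
    (ha : ∀ s, HasDerivAt a (-k • b s) s) (hb : ∀ s, HasDerivAt b (k • a s) s) :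
    Function.Periodic a (k⁻¹ * (2 * π)) := fun s => by
  have hcos : cos (k * (s + k⁻¹ * (2 * π))) = cos (k * s) := cos_periodic.const_mul k s
  have hsin : sin (k * (s + k⁻¹ * (2 * π))) = sin (k * s) := sin_periodic.const_mul k s
  rw [eq_cos_smul_sub_sin_smul_of_hasDerivAt ha hb, hcos, hsin,
    ← eq_cos_smul_sub_sin_smul_of_hasDerivAt ha hb]

end Calculus

/-- Parametrisation by arc length. The condition is written in coordinates because the norm of
`ℝ × ℝ` in Mathlib is the sup norm. -/
def IsArcLength (γ : ℝ → ℝ × ℝ) : Prop :=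
  ∀ s, (deriv γ s).1 ^ 2 + (deriv γ s).2 ^ 2 = 1

/-- The equation `-κ'' = 2 S ⟨γ', γ⟩` of a rotator with rotation speed `S`. -/
def IsRotator (S : ℝ) (γ : ℝ → ℝ × ℝ) : Prop :=
  ∀ s, -(deriv (deriv (curvA γ)) s) = 2 * S * innerP (deriv γ s) (γ s)

/-- The boundary term `κ κ' - 2 S ⟨ν, γ⟩` obtained by integrating `κ' ^ 2` by parts along a rotator
with rotation speed `S`. -/
noncomputable def rotatorBoundaryTerm (S : ℝ) (γ : ℝ → ℝ × ℝ) (s : ℝ) : ℝ :=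
  curvA γ s * deriv (curvA γ) s - 2 * S * innerP (nuA γ s) (γ s)

theorem contDiff_curvA {γ : ℝ → ℝ × ℝ} {n : WithTop ℕ∞} (hγ : ContDiff ℝ (n + 1 + 1) γ) :
    ContDiff ℝ n (curvA γ) := by
  have hT : ContDiff ℝ n (deriv γ) := hγ.deriv'.of_succ
  have : ContDiff ℝ n (deriv (deriv γ)) := hγ.deriv'.deriv'
  unfold curvA innerP nuA
  fun_prop

namespace IsArcLength

variable {γ : ℝ → ℝ × ℝ}

theorem innerP_deriv_deriv_deriv_eq_zero (hunit : IsArcLength γ) (hγ : ContDiff ℝ 2 γ) (s : ℝ) :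
    innerP (deriv γ s) (deriv (deriv γ) s) = 0 := by
  have hT := (hγ.differentiable_deriv_two s).hasDerivAt
  have hone : (fun t => innerP (deriv γ t) (deriv γ t)) = fun _ => 1 :=
    funext fun t => by simpa only [innerP, sq] using hunit t
  have h := (hasDerivAt_innerP hT hT).unique (hone ▸ hasDerivAt_const s (1 : ℝ))
  simp only [innerP] at h ⊢
  linarith

theorem hasDerivAt_deriv (hunit : IsArcLength γ) (hγ : ContDiff ℝ 2 γ) (s : ℝ) :
    HasDerivAt (deriv γ) (curvA γ s • nuA γ s) s := by
  refine (hγ.differentiable_deriv_two s).hasDerivAt.congr_deriv ?_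
  have hu := hunit s
  have horth := hunit.innerP_deriv_deriv_deriv_eq_zero hγ s
  simp only [innerP] at horth
  ext <;> simp only [curvA, innerP, nuA, Prod.smul_fst, Prod.smul_snd, smul_eq_mul]
  · linear_combination (-(deriv (deriv γ) s).1) * hu + (deriv γ s).1 * horth
  · linear_combination (-(deriv (deriv γ) s).2) * hu + (deriv γ s).2 * horth

theorem hasDerivAt_nuA (hunit : IsArcLength γ) (hγ : ContDiff ℝ 2 γ) (s : ℝ) :
    HasDerivAt (nuA γ) (-curvA γ s • deriv γ s) s := by
  have hT := hunit.hasDerivAt_deriv hγ s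
  refine ((hasDerivAt_snd hT).prodMk (hasDerivAt_fst hT).neg).congr_deriv ?_
  ext <;> simp [nuA]

theorem eq_line_of_curvA_eq_zero (hunit : IsArcLength γ) (hγ : ContDiff ℝ 2 γ)
    (hκ : ∀ s, curvA γ s = 0) (s : ℝ) : γ s = γ 0 + s • deriv γ 0 := by
  have hT (t : ℝ) : deriv γ t = deriv γ 0 :=
    eq_of_hasDerivAt_zero (fun u => by simpa [hκ u] using hunit.hasDerivAt_deriv hγ u) t 0
  exact eq_add_smul_of_hasDerivAt_const
    (fun t => hT t ▸ (hγ.differentiable two_ne_zero t).hasDerivAt) s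

theorem periodic_of_curvA_eq_const (hunit : IsArcLength γ) (hγ : ContDiff ℝ 2 γ) {k : ℝ}
    (hk : k ≠ 0) (hκ : ∀ s, curvA γ s = k) : Function.Periodic γ (k⁻¹ * (2 * π)) := fun s => by
  have hT (t : ℝ) : HasDerivAt (deriv γ) (k • nuA γ t) t := hκ t ▸ hunit.hasDerivAt_deriv hγ t
  have hν (t : ℝ) : HasDerivAt (nuA γ) (-k • deriv γ t) t := hκ t ▸ hunit.hasDerivAt_nuA hγ t
  have hcentre (t : ℝ) : HasDerivAt (fun u => γ u + k⁻¹ • nuA γ u) 0 t :=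
    ((hγ.differentiable two_ne_zero t).hasDerivAt.add ((hν t).const_smul k⁻¹)).congr_deriv
      (by simp [smul_smul, hk])
  have hν_periodic : Function.Periodic (nuA γ) (k⁻¹ * (2 * π)) := 
    periodic_of_hasDerivAt_rotation hν hT
  have h := eq_of_hasDerivAt_zero hcentre (s + k⁻¹ * (2 * π)) s
  rw [hν_periodic s] at h
  exact add_right_cancel h

theorem eq_line_or_periodic_of_curvA_eq_const (hunit : IsArcLength γ) (hγ : ContDiff ℝ 2 γ) {k : ℝ}
    (hκ : ∀ s, curvA γ s = k) :
    (∀ s, γ s = γ 0 + s • deriv γ 0) ∨ ∃ P : ℝ, 0 < P ∧ Function.Periodic γ P := by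
  rcases eq_or_ne k 0 with rfl | hk
  · exact Or.inl (hunit.eq_line_of_curvA_eq_zero hγ hκ)
  · have hper := hunit.periodic_of_curvA_eq_const hγ hk hκ
    have hP : k⁻¹ * (2 * π) ≠ 0 := mul_ne_zero (inv_ne_zero hk) two_pi_pos.ne'
    refine Or.inr ⟨|k⁻¹ * (2 * π)|, abs_pos.mpr hP, ?_⟩
    rcases abs_choice (k⁻¹ * (2 * π)) with h | h <;> rw [h]
    exacts [hper, hper.neg]

end IsArcLength

theorem IsRotator.hasDerivAt_rotatorBoundaryTerm {γ : ℝ → ℝ × ℝ} {S : ℝ} (hrot : IsRotator S γ)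
    (hunit : IsArcLength γ) (hγ : ContDiff ℝ 4 γ) (s : ℝ) :
    HasDerivAt (rotatorBoundaryTerm S γ) (deriv (curvA γ) s ^ 2) s := by
  have hκ : ContDiff ℝ 2 (curvA γ) := contDiff_curvA (hγ.of_le (by norm_num))
  have hκκ' := (hκ.differentiable two_ne_zero s).hasDerivAt.mul
    (hκ.differentiable_deriv_two s).hasDerivAt
  have hνγ := hasDerivAt_innerP (hunit.hasDerivAt_nuA (hγ.of_le (by norm_num)) s)
    (hγ.differentiable four_ne_zero s).hasDerivAt
  refine (hκκ'.sub (hνγ.const_mul (2 * S))).congr_deriv ?_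
  have hr := hrot s
  simp only [innerP, nuA, Prod.smul_fst, Prod.smul_snd, smul_eq_mul] at hr ⊢
  linear_combination (-curvA γ s) * hr

theorem open_rotator_with_decay_general {ι : Type*} {γ : ℝ → ℝ × ℝ} (hγ : ContDiff ℝ 4 γ)
    (hunit : IsArcLength γ) {S : ℝ} (hrot : IsRotator S γ) {l : Filter ι} [l.NeBot]
    {p q : ι → ℝ} (hp : Tendsto p l atBot) (hq : Tendsto q l atTop)
    (hdecay : Tendsto (fun i => rotatorBoundaryTerm S γ (q i) - rotatorBoundaryTerm S γ (p i))
      l (nhds 0)) :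
    (∀ s, deriv (curvA γ) s = 0) ∧
      ((¬ ∃ P : ℝ, 0 < P ∧ ∀ s, γ (s + P) = γ s) → ∀ s, γ s = γ 0 + s • deriv γ 0) := by
  have hκ' : ∀ s, deriv (curvA γ) s = 0 := eq_zero_of_hasDerivAt_sq_of_tendsto_sub
    (hrot.hasDerivAt_rotatorBoundaryTerm hunit hγ) hp hq hdecay
  have hκ_diff : Differentiable ℝ (curvA γ) :=
    (contDiff_curvA (n := 1) (hγ.of_le (by norm_num))).differentiable one_ne_zero
  have hκ (s : ℝ) : curvA γ s = curvA γ 0 := is_const_of_deriv_eq_zero hκ_diff hκ' s 0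
  have hγ₂ : ContDiff ℝ 2 γ := hγ.of_le (by norm_num)
  exact ⟨hκ', (hunit.eq_line_or_periodic_of_curvA_eq_const hγ₂ hκ).resolve_right⟩

/-- an open rotator for the curve diffusion flow satisfying the decay
condition at infinity has constant curvature; if moreover it is not periodic,
it is a straight line. -/
theorem open_rotator_with_decay
    (γ : ℝ → ℝ × ℝ)
    (hsmooth : ContDiff ℝ (⊤ : ℕ∞) γ)
    (hunit : ∀ s, (deriv γ s).1 ^ 2 + (deriv γ s).2 ^ 2 = 1)
    (S : ℝ)
    (hrot : ∀ s, -(deriv (deriv (curvA γ)) s) = 2 * S * innerP (deriv γ s) (γ s))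
    (hdecay : ∀ p q : ℕ → ℝ, Filter.Tendsto p Filter.atTop Filter.atBot →
      Filter.Tendsto q Filter.atTop Filter.atTop →
      Filter.Tendsto (fun i =>
        (curvA γ (q i) * deriv (curvA γ) (q i) - 2 * S * innerP (nuA γ (q i)) (γ (q i)))
          - (curvA γ (p i) * deriv (curvA γ) (p i) - 2 * S * innerP (nuA γ (p i)) (γ (p i))))
        Filter.atTop (nhds 0)) :
    (∀ s, deriv (curvA γ) s = 0) ∧
      ((¬ ∃ P : ℝ, 0 < P ∧ ∀ s, γ (s + P) = γ s) →
        ∀ s, γ s = γ 0 + s • deriv γ 0) := by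
  have hq : Tendsto (fun i : ℕ => (i : ℝ)) atTop atTop := tendsto_natCast_atTop_atTop
  have hp : Tendsto (fun i : ℕ => -(i : ℝ)) atTop atBot := tendsto_neg_atTop_atBot.comp hq
  exact open_rotator_with_decay_general (contDiff_infty.mp hsmooth 4) hunit hrot hp hq
    (hdecay _ _ hp hq)
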